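/- arXiv:2508.10179 — 2 statements merged into one kernel-verified Lean document; each statement's English description precedes it below -/
import Mathlib

section
/- Let B ⊂ ℝ³ be the open unit ball and let φ : B → ℝ³ be a smooth diffeomorphism onto the open set U = φ(B) with invertible derivative Dφ(X) at every X ∈ B, such that φ and Dφ extend continuously to the closed unit ball. Let S̊ be a field of symmetric 3×3 matrices, continuous on the closed unit ball and smooth on B, satisfying the traction-free boundary condition S̊(X)·X = 0 for every X with |X| = 1. Define the spatial residual stress σ̊ on U by σ̊(φ(X)) = Dφ(X) S̊(X) Dφ(X)ᵀ. If the pair (φ⁻¹, σ̊) is universal, then Dφ is constant on B and S̊ = 0 on the closed unit ball. In particular, a compressible isotropic Cauchy elastic body occupying the unit ball with a non-trivial residual stress admits no universal deformations, and the universal deformations in the residual-stress-free case are exactly the homogeneous ones. -/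
open Matrix

/-- The Jacobian matrix (derivative) of a map `ψ : ℝ³ → ℝ³` at a point. -/
noncomputable def jac (ψ : (Fin 3 → ℝ) → (Fin 3 → ℝ)) (x : Fin 3 → ℝ) :
    Matrix (Fin 3) (Fin 3) ℝ :=
  fun i j => fderiv ℝ ψ x (Pi.single j 1) i

/-- Divergence of a matrix field: `(div T)_i = Σ_j ∂T_{ij}/∂x_j`. -/
noncomputable def mdiv (T : (Fin 3 → ℝ) → Matrix (Fin 3) (Fin 3) ℝ) (x : Fin 3 → ℝ) :
    Fin 3 → ℝ :=
  fun i => ∑ j, fderiv ℝ (fun y => T y i j) x (Pi.single j 1)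

/-- Left Cauchy–Green tensor `b = F Fᵀ` with `F = (Dψ)⁻¹`. -/
noncomputable def bField (ψ : (Fin 3 → ℝ) → (Fin 3 → ℝ)) (x : Fin 3 → ℝ) :
    Matrix (Fin 3) (Fin 3) ℝ :=
  (jac ψ x)⁻¹ * ((jac ψ x)⁻¹)ᵀ

/-- `c = b⁻¹ = Dψᵀ Dψ`. -/
noncomputable def cField (ψ : (Fin 3 → ℝ) → (Fin 3 → ℝ)) (x : Fin 3 → ℝ) :
    Matrix (Fin 3) (Fin 3) ℝ :=
  (jac ψ x)ᵀ * jac ψ x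

/-- The ten invariants of the pair `(b, σ̊)`. -/
noncomputable def invariants (b σ : Matrix (Fin 3) (Fin 3) ℝ) : Fin 10 → ℝ :=
  ![b.trace, (b.trace ^ 2 - (b * b).trace) / 2, b.det,
    σ.trace, (σ * σ).trace, (σ * σ * σ).trace,
    (b * σ).trace, (b * b * σ).trace, (b * σ * σ).trace, (b * b * σ * σ).trace]

/-- The Cauchy stress built from response functions `α₀,…,α₇` and tensors `b`, `c`, `σ̊`. -/
noncomputable def cauchyStress (α : Fin 8 → (Fin 10 → ℝ) → ℝ)
    (b c σ : Matrix (Fin 3) (Fin 3) ℝ) : Matrix (Fin 3) (Fin 3) ℝ :=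
  α 0 (invariants b σ) • (1 : Matrix (Fin 3) (Fin 3) ℝ)
    + α 1 (invariants b σ) • b + α 2 (invariants b σ) • c
    + α 3 (invariants b σ) • σ + α 4 (invariants b σ) • (σ * σ)
    + α 5 (invariants b σ) • (b * σ + σ * b)
    + α 6 (invariants b σ) • (c * σ + σ * c)
    + α 7 (invariants b σ) • (b * σ * σ + σ * σ * b)

/-- `(ψ, σ̊)` is universal: for all smooth response functions, the Cauchy stress is
divergence-free on `U`. -/
def IsUniversal (U : Set (Fin 3 → ℝ)) (ψ : (Fin 3 → ℝ) → (Fin 3 → ℝ))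
    (σ0 : (Fin 3 → ℝ) → Matrix (Fin 3) (Fin 3) ℝ) : Prop :=
  ∀ α : Fin 8 → (Fin 10 → ℝ) → ℝ, (∀ i, ContDiff ℝ (⊤ : ℕ∞) (α i)) →
    ∀ x ∈ U, mdiv (fun y => cauchyStress α (bField ψ y) (cField ψ y) (σ0 y)) x = 0

/-- The open Euclidean unit ball in `ℝ³`. -/
def unitBall : Set (Fin 3 → ℝ) := {X | ∑ i, X i ^ 2 < 1}

/-- The closed Euclidean unit ball in `ℝ³`. -/
def unitClosedBall : Set (Fin 3 → ℝ) := {X | ∑ i, X i ^ 2 ≤ 1}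


/-- Partial derivative of a scalar function. -/
noncomputable def pd (j : Fin 3) (f : (Fin 3 → ℝ) → ℝ) (x : Fin 3 → ℝ) : ℝ :=
  fderiv ℝ f x (Pi.single j 1)

/-- Smooth on an open set. -/
def Smo (U : Set (Fin 3 → ℝ)) (f : (Fin 3 → ℝ) → ℝ) : Prop := ContDiffOn ℝ (⊤ : ℕ∞) f U

lemma Smo.diff {U : Set (Fin 3 → ℝ)} (hU : IsOpen U) {f : (Fin 3 → ℝ) → ℝ} (hf : Smo U f)
    {x : Fin 3 → ℝ} (hx : x ∈ U) : DifferentiableAt ℝ f x :=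
  (ContDiffOn.contDiffAt hf (hU.mem_nhds hx)).differentiableAt (by simp)

lemma Smo.pd {U : Set (Fin 3 → ℝ)} (hU : IsOpen U) {f : (Fin 3 → ℝ) → ℝ} (hf : Smo U f)
    (j : Fin 3) : Smo U (pd j f) := by
  have h : ContDiffOn ℝ (⊤ : ℕ∞) (fderiv ℝ f) U :=
    ContDiffOn.fderiv_of_isOpen hf hU (by simp)
  exact h.clm_apply contDiffOn_const

lemma pd_add {f g : (Fin 3 → ℝ) → ℝ} {x : Fin 3 → ℝ} (hf : DifferentiableAt ℝ f x)
    (hg : DifferentiableAt ℝ g x) (j : Fin 3) :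
    pd j (fun y => f y + g y) x = pd j f x + pd j g x := by
  simp [pd, fderiv_fun_add hf hg]

lemma pd_mul {f g : (Fin 3 → ℝ) → ℝ} {x : Fin 3 → ℝ} (hf : DifferentiableAt ℝ f x)
    (hg : DifferentiableAt ℝ g x) (j : Fin 3) :
    pd j (fun y => f y * g y) x = f x * pd j g x + g x * pd j f x := by
  simp [pd, fderiv_fun_mul hf hg]

lemma pd_sum {ι : Type*} (s : Finset ι) {f : ι → (Fin 3 → ℝ) → ℝ} {x : Fin 3 → ℝ}
    (hf : ∀ i ∈ s, DifferentiableAt ℝ (f i) x) (j : Fin 3) :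
    pd j (fun y => ∑ i ∈ s, f i y) x = ∑ i ∈ s, pd j (f i) x := by
  simp [pd, fderiv_fun_sum hf]

lemma pd_congr {U : Set (Fin 3 → ℝ)} (hU : IsOpen U) {f g : (Fin 3 → ℝ) → ℝ}
    (h : ∀ x ∈ U, f x = g x) {x : Fin 3 → ℝ} (hx : x ∈ U) (j : Fin 3) : pd j f x = pd j g x := by
  have : f =ᶠ[nhds x] g := by
    filter_upwards [hU.mem_nhds hx] with y hy using h y hy
  simp [pd, this.fderiv_eq]

lemma pd_comm {U : Set (Fin 3 → ℝ)} (hU : IsOpen U) {f : (Fin 3 → ℝ) → ℝ} (hf : Smo U f)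
    {x : Fin 3 → ℝ} (hx : x ∈ U) (i j : Fin 3) : pd i (pd j f) x = pd j (pd i f) x := by
  have hc : ContDiffAt ℝ (⊤ : ℕ∞) f x := ContDiffOn.contDiffAt hf (hU.mem_nhds hx)
  have hs := hc.isSymmSndFDerivAt (by simp; norm_cast)
  have hd : DifferentiableAt ℝ (fderiv ℝ f) x :=
    (hc.fderiv_right (m := 1) (by norm_cast)).differentiableAt (by simp)
  have key : ∀ a b : Fin 3, pd a (pd b f) x
      = fderiv ℝ (fderiv ℝ f) x (Pi.single a 1) (Pi.single b 1) := by
    intro a b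
    unfold pd
    rw [fderiv_clm_apply hd (differentiableAt_const _)]
    simp
  rw [key, key]
  exact hs _ _

lemma fderiv_zero_of_pd {f : (Fin 3 → ℝ) → ℝ} {x : Fin 3 → ℝ} (h : ∀ j, pd j f x = 0) :
    fderiv ℝ f x = 0 := by
  apply ContinuousLinearMap.coe_injective
  apply LinearMap.pi_ext'
  intro j
  ext
  simpa [pd] using h j

lemma const_of_pd {U : Set (Fin 3 → ℝ)} (hU : IsOpen U) (hc : IsPreconnected U)
    {f : (Fin 3 → ℝ) → ℝ} (hf : ∀ x ∈ U, DifferentiableAt ℝ f x)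
    (h : ∀ x ∈ U, ∀ j, pd j f x = 0) {x y : Fin 3 → ℝ} (hx : x ∈ U) (hy : y ∈ U) : f x = f y :=
  hU.is_const_of_fderiv_eq_zero hc (fun z hz => (hf z hz).differentiableWithinAt)
    (fun z hz => fderiv_zero_of_pd (h z hz)) hx hy

lemma homog {U : Set (Fin 3 → ℝ)} (hU : IsOpen U) (p : Fin 3 → (Fin 3 → ℝ) → ℝ)
    (hp : ∀ a, Smo U (p a))
    (h1 : ∀ x ∈ U, ∀ i, ∑ j, pd j (fun y => ∑ a, pd i (p a) y * pd j (p a) y) x = 0)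
    (h2 : ∀ x ∈ U, ∀ i, pd i (fun y => ∑ a, ∑ j, pd j (p a) y * pd j (p a) y) x = 0)
    (hdet : ∀ x ∈ U, (Matrix.of fun a j => pd j (p a) x).det ≠ 0) :
    ∀ x ∈ U, ∀ a i j, pd i (pd j (p a)) x = 0 := by
  have D1 : ∀ a i, ∀ x ∈ U, DifferentiableAt ℝ (pd i (p a)) x := fun a i x hx =>
    ((hp a).pd hU i).diff hU hx
  have D2 : ∀ a i j, ∀ x ∈ U, DifferentiableAt ℝ (pd i (pd j (p a))) x := fun a i j x hx =>
    (((hp a).pd hU j).pd hU i).diff hU hx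
  have h2' : ∀ x ∈ U, ∀ i, ∑ a, ∑ j, pd j (p a) x * pd i (pd j (p a)) x = 0 := by
    intro x hx i
    have := h2 x hx i
    rw [pd_sum _ (fun a _ => DifferentiableAt.fun_sum fun j _ => (D1 a j x hx).fun_mul (D1 a j x hx))] at this
    simp_rw [pd_sum Finset.univ (fun j _ => (D1 _ j x hx).fun_mul (D1 _ j x hx)),
      pd_mul (D1 _ _ x hx) (D1 _ _ x hx), ← two_mul, ← Finset.mul_sum] at this
    linarith
  have lap : ∀ x ∈ U, ∀ a, ∑ j, pd j (pd j (p a)) x = 0 := by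
    intro x hx
    have h1' : ∀ i, ∑ a, pd i (p a) x * ∑ j, pd j (pd j (p a)) x = 0 := by
      intro i
      have e1 := h1 x hx i
      have e2 := h2' x hx i
      simp_rw [pd_sum Finset.univ (fun a _ => (D1 a i x hx).fun_mul (D1 a _ x hx)),
        pd_mul (D1 _ _ x hx) (D1 _ _ x hx)] at e1
      rw [Finset.sum_comm] at e1
      simp_rw [Finset.sum_add_distrib, ← Finset.mul_sum] at e1
      simp_rw [pd_comm hU (hp _) hx _ i] at e1
      linarith
    have hz : Matrix.vecMul (fun a => ∑ j, pd j (pd j (p a)) x) (Matrix.of fun a j => pd j (p a) x) = 0 := by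
      ext i
      simp only [Matrix.vecMul, dotProduct, Matrix.of_apply, Pi.zero_apply]
      rw [← h1' i]
      exact Finset.sum_congr rfl fun a _ => mul_comm _ _
    have := Matrix.eq_zero_of_vecMul_eq_zero (hdet x hx) hz
    intro a
    exact congrFun this a
  intro x hx
  have h3 : ∑ i, ∑ a, ∑ j, (pd j (p a) x * pd i (pd i (pd j (p a))) x
      + pd i (pd j (p a)) x * pd i (pd j (p a)) x) = 0 := by
    apply Finset.sum_eq_zero
    intro i _
    have := pd_congr hU (g := fun _ => 0) (fun y hy => h2' y hy i) hx i
    rw [pd_sum _ (fun a _ => DifferentiableAt.fun_sum fun j _ => (D1 a j x hx).fun_mul (D2 a i j x hx))] at this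
    simp_rw [pd_sum Finset.univ (fun j _ => (D1 _ j x hx).fun_mul (D2 _ i j x hx)),
      pd_mul (D1 _ _ x hx) (D2 _ _ _ x hx)] at this
    rw [this]
    simp [pd]
  have h4 : ∀ a j, ∑ i, pd i (pd i (pd j (p a))) x = 0 := by
    intro a j
    have e : ∀ i, pd i (pd i (pd j (p a))) x = pd j (pd i (pd i (p a))) x := by
      intro i
      rw [pd_congr hU (g := pd j (pd i (p a))) (fun y hy => pd_comm hU (hp a) hy i j) hx i]
      exact pd_comm hU ((hp a).pd hU i) hx i j
    simp_rw [e]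
    rw [← pd_sum _ (fun i _ => D2 a i i x hx)]
    rw [pd_congr hU (g := fun _ => 0) (fun y hy => lap y hy a) hx j]
    simp [pd]
  have h5 : ∑ i, ∑ a, ∑ j, pd i (pd j (p a)) x * pd i (pd j (p a)) x = 0 := by
    simp_rw [Finset.sum_add_distrib] at h3
    have : ∑ i, ∑ a, ∑ j, pd j (p a) x * pd i (pd i (pd j (p a))) x = 0 := by
      rw [Finset.sum_comm]
      apply Finset.sum_eq_zero
      intro a _
      rw [Finset.sum_comm]
      apply Finset.sum_eq_zero
      intro j _
      rw [← Finset.mul_sum, h4, mul_zero]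
    linarith
  intro a i j
  have hn : ∀ i a j, 0 ≤ pd i (pd j (p a)) x * pd i (pd j (p a)) x := fun _ _ _ => mul_self_nonneg _
  have a1 := (Finset.sum_eq_zero_iff_of_nonneg (fun i _ => Finset.sum_nonneg fun a _ =>
    Finset.sum_nonneg fun j _ => hn i a j)).1 h5 i (Finset.mem_univ _)
  have a2 := (Finset.sum_eq_zero_iff_of_nonneg (fun a _ => Finset.sum_nonneg fun j _ =>
    hn i a j)).1 a1 a (Finset.mem_univ _)
  have a3 := (Finset.sum_eq_zero_iff_of_nonneg (fun j _ => hn i a j)).1 a2 j (Finset.mem_univ _)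
  exact mul_self_eq_zero.1 a3

lemma isOpen_unitBall : IsOpen unitBall := by
  unfold unitBall
  exact isOpen_lt (by fun_prop) continuous_const

lemma isCompact_unitClosedBall : IsCompact unitClosedBall := by
  apply Metric.isCompact_of_isClosed_isBounded
  · unfold unitClosedBall
    exact isClosed_le (by fun_prop) continuous_const
  · refine (Metric.isBounded_closedBall (x := (0 : Fin 3 → ℝ)) (r := 1)).subset ?_
    intro X hX
    rw [mem_closedBall_zero_iff, pi_norm_le_iff_of_nonneg zero_le_one]
    intro i
    have h : X i ^ 2 ≤ ∑ i, X i ^ 2 :=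
      Finset.single_le_sum (f := fun i => X i ^ 2) (fun i _ => sq_nonneg _) (Finset.mem_univ i)
    have h2 : ∑ i, X i ^ 2 ≤ 1 := hX
    rw [Real.norm_eq_abs]
    exact abs_le_one_iff_mul_self_le_one.2 (by nlinarith)

lemma unitBall_sub {X : Fin 3 → ℝ} (h : X ∈ unitBall) : X ∈ unitClosedBall :=
  le_of_lt (show ∑ i, X i ^ 2 < 1 from h)

lemma integral_pd_zero {f : (Fin 3 → ℝ) → ℝ} (hf : ContDiff ℝ 1 f) (hs : HasCompactSupport f)
    (j : Fin 3) : ∫ x, pd j f x = 0 ∧ Continuous (pd j f) ∧ HasCompactSupport (pd j f) := by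
  have hc : Continuous (pd j f) := (hf.continuous_fderiv (by simp)).clm_apply continuous_const
  have hs' : HasCompactSupport (pd j f) := hs.fderiv_apply ℝ _
  refine ⟨?_, hc, hs'⟩
  have := integral_mul_fderiv_eq_neg_fderiv_mul_of_integrable (μ := MeasureTheory.volume)
    (f := fun _ : Fin 3 → ℝ => (1 : ℝ)) (g := f) (v := Pi.single j 1)
    (by simp) (by simpa [pd] using! hc.integrable_of_hasCompactSupport hs')
    (by simpa using hf.continuous.integrable_of_hasCompactSupport hs)
    (fun x _ => differentiableAt_const _) (fun x _ => hf.differentiable (by simp) x)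
  simpa [pd] using this

lemma pd_coord (i j : Fin 3) (x : Fin 3 → ℝ) :
    pd i (fun y => y j) x = if i = j then 1 else 0 := by
  unfold pd
  have : HasFDerivAt (fun y : Fin 3 → ℝ => y j) (ContinuousLinearMap.proj (R := ℝ) (φ := fun _ : Fin 3 => ℝ) j) x :=
    (ContinuousLinearMap.proj (R := ℝ) (φ := fun _ : Fin 3 => ℝ) j).hasFDerivAt
  rw [this.fderiv]
  simp [Pi.single_apply, eq_comm]

lemma pd_normSq (i : Fin 3) (x : Fin 3 → ℝ) :
    pd i (fun y => ∑ j, y j ^ 2) x = 2 * x i := by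
  have hd : ∀ j, DifferentiableAt ℝ (fun y : Fin 3 → ℝ => y j) x := fun j => by fun_prop
  simp_rw [pow_two]
  rw [pd_sum _ (fun j _ => (hd j).fun_mul (hd j))]
  simp_rw [pd_mul (hd _) (hd _), pd_coord]
  simp [two_mul, Finset.sum_add_distrib]

lemma pd_comp {q : ℝ → ℝ} {f : (Fin 3 → ℝ) → ℝ} {x : Fin 3 → ℝ} (hq : DifferentiableAt ℝ q (f x))
    (hf : DifferentiableAt ℝ f x) (i : Fin 3) :
    pd i (fun y => q (f y)) x = deriv q (f x) * pd i f x := by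
  have := (hq.hasDerivAt.comp_hasFDerivAt x hf.hasFDerivAt).fderiv
  unfold pd
  change fderiv ℝ (q ∘ f) x _ = _
  rw [this]
  simp

lemma flux (v : Fin 3 → (Fin 3 → ℝ) → ℝ) (k : ℝ) (hv : ∀ i, Smo unitBall (v i))
    (hcont : ∀ i, ContinuousOn (v i) unitClosedBall)
    (hb : ∀ X : Fin 3 → ℝ, ∑ i, X i ^ 2 = 1 → ∑ i, v i X * X i = 0)
    (hdiv : ∀ X ∈ unitBall, ∑ i, pd i (v i) X = k) : k ≤ 0 := by
  by_contra hk
  push Not at hk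
  set N : (Fin 3 → ℝ) → ℝ := fun X => ∑ i, X i ^ 2 with hN
  have hNc : ContDiff ℝ (⊤ : ℕ∞) N := by unfold N; fun_prop
  have hNn : ∀ X, 0 ≤ N X := fun X => Finset.sum_nonneg fun i _ => sq_nonneg _
  have hN0 : N 0 = 0 := by simp [hN]
  obtain ⟨δ, hδ, hδk⟩ : ∃ δ : ℝ, 0 < δ ∧ 3 * δ < k := ⟨k / 6, by linarith, by linarith⟩
  set g : (Fin 3 → ℝ) → ℝ := fun X => ∑ i, v i X * X i - δ * N X with hg
  have hgc : ContinuousOn g unitClosedBall := by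
    apply ContinuousOn.sub
    · exact continuousOn_finsetSum _ fun i _ => (hcont i).mul (by fun_prop)
    · exact (continuous_const.mul hNc.continuous).continuousOn
  have hK : IsCompact (unitClosedBall ∩ g ⁻¹' Set.Ici 0) :=
    isCompact_unitClosedBall.of_isClosed_subset
      (hgc.preimage_isClosed_of_isClosed isCompact_unitClosedBall.isClosed isClosed_Ici)
      Set.inter_subset_left
  have h0 : (0 : Fin 3 → ℝ) ∈ unitClosedBall ∩ g ⁻¹' Set.Ici 0 := by
    constructor
    · simp [unitClosedBall]
    · simp [hg, hN0]
  obtain ⟨X0, hX0, hmax⟩ := hK.exists_isMaxOn ⟨0, h0⟩ hNc.continuous.continuousOn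
  set m := N X0 with hm
  have hm0 : 0 ≤ m := hNn _
  have hm1 : m < 1 := by
    have h1 : m ≤ 1 := hX0.1
    rcases h1.lt_or_eq with h | h
    · exact h
    · exfalso
      have h2 : 0 ≤ g X0 := hX0.2
      have h3 := hb X0 h
      simp only [hg] at h2
      rw [h3] at h2
      rw [← hm, h] at h2
      linarith
  have hneg : ∀ X ∈ unitBall, m < N X → g X < 0 := by
    intro X hX hmX
    by_contra hc
    push Not at hc
    have := hmax (show X ∈ unitClosedBall ∩ g ⁻¹' Set.Ici 0 from ⟨unitBall_sub hX, hc⟩)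
    exact absurd (show N X ≤ m from this) (not_le.2 hmX)
  set m' := (m + 1) / 2 with hm'
  have hmm' : 0 < m' - m := by rw [hm']; linarith
  have hm'1 : m' < 1 := by rw [hm']; linarith
  set q : ℝ → ℝ := fun s => Real.smoothTransition ((m' - s) / (m' - m)) with hq
  have hqs : ContDiff ℝ (⊤ : ℕ∞) q :=
    Real.smoothTransition.contDiff.comp ((contDiff_const.sub contDiff_id).div_const _)
  have hqd : ∀ s, DifferentiableAt ℝ q s := fun s => hqs.differentiable (by simp) s
  have hqanti : Antitone q := by
    intro s t hst
    apply Real.smoothTransition.monotone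
    gcongr
  have hq1 : ∀ s, s ≤ m → q s = 1 := by
    intro s hs
    apply Real.smoothTransition.one_of_one_le
    rw [le_div_iff₀ hmm']
    linarith
  have hq0 : ∀ s, m' ≤ s → q s = 0 := by
    intro s hs
    apply Real.smoothTransition.zero_of_nonpos
    apply div_nonpos_of_nonpos_of_nonneg <;> linarith
  have hq' : ∀ s, deriv q s ≤ 0 := fun s => hqanti.deriv_nonpos
  have hq'0 : ∀ s, s ≤ m → deriv q s = 0 := by
    intro s hs
    apply IsLocalMax.deriv_eq_zero
    filter_upwards with t
    rw [hq1 s hs]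
    exact Real.smoothTransition.le_one _
  set w : Fin 3 → (Fin 3 → ℝ) → ℝ := fun i X => q (N X) * (v i X + (-δ) * X i) with hw
  have hw0 : ∀ i X, m' ≤ N X → w i X = 0 := by
    intro i X h
    simp [hw, hq0 _ h]
  have hwloc : ∀ i X, m' < N X → w i =ᶠ[nhds X] fun _ => 0 := by
    intro i X h
    have : {Y | m' < N Y} ∈ nhds X := (isOpen_lt continuous_const hNc.continuous).mem_nhds h
    filter_upwards [this] with Y hY using hw0 i Y (le_of_lt hY)
  have hws : ∀ i, ContDiff ℝ 1 (w i) := by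
    intro i
    rw [contDiff_iff_contDiffAt]
    intro X
    by_cases h : N X < 1
    · have hvX : ContDiffAt ℝ 1 (v i) X :=
        (ContDiffOn.contDiffAt (hv i) (isOpen_unitBall.mem_nhds h)).of_le (by norm_cast)
      have h2 : ContDiffAt ℝ 1 (fun X => q (N X)) X :=
        ((hqs.comp hNc).of_le (by norm_cast)).contDiffAt
      exact h2.mul (hvX.add (contDiffAt_const.mul (by fun_prop)))
    · exact (contDiffAt_const (c := (0:ℝ))).congr_of_eventuallyEq (hwloc i X (by linarith))
  have hwc : ∀ i, HasCompactSupport (w i) := by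
    intro i
    refine HasCompactSupport.intro isCompact_unitClosedBall ?_
    intro X hX
    apply hw0
    have : ¬ N X ≤ 1 := hX
    linarith
  set D : (Fin 3 → ℝ) → ℝ := fun X => ∑ i, pd i (w i) X with hD
  have hDball : ∀ X ∈ unitBall, D X = q (N X) * (k - 3 * δ) + 2 * (deriv q (N X) * g X) := by
    intro X hX
    have hdN : DifferentiableAt ℝ N X := hNc.differentiable (by simp) X
    have hdq : DifferentiableAt ℝ (fun X => q (N X)) X := (hqd _).comp X hdN
    have hdv : ∀ i, DifferentiableAt ℝ (v i) X := fun i => (hv i).diff isOpen_unitBall hX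
    have hdc : ∀ i : Fin 3, DifferentiableAt ℝ (fun X : Fin 3 → ℝ => X i) X := fun i => by fun_prop
    have hdc' : ∀ i : Fin 3, DifferentiableAt ℝ (fun X : Fin 3 → ℝ => (-δ) * X i) X :=
      fun i => (hdc i).const_mul _
    have e : ∀ i, pd i (w i) X = q (N X) * (pd i (v i) X - δ)
        + (v i X - δ * X i) * (deriv q (N X) * (2 * X i)) := by
      intro i
      simp only [hw]
      rw [pd_mul hdq ((hdv i).fun_add (hdc' i)), pd_add (hdv i) (hdc' i),
        pd_mul (differentiableAt_const _) (hdc i), pd_coord, pd_comp (hqd _) hdN, pd_normSq]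
      simp [pd]
      ring
    have e2 : g X = ∑ i, v i X * X i - δ * ∑ i, X i ^ 2 := rfl
    have e3 := hdiv X hX
    simp only [hD, e]
    rw [e2, ← e3]
    simp only [Fin.sum_univ_three]
    ring
  have hDn : ∀ X, 0 ≤ D X := by
    intro X
    by_cases h : N X < 1
    · rw [hDball X h]
      have h1 : 0 ≤ q (N X) := Real.smoothTransition.nonneg _
      have h2 : 0 ≤ deriv q (N X) * g X := by
        by_cases hmX : m < N X
        · exact mul_nonneg_of_nonpos_of_nonpos (hq' _) (hneg X h hmX).le
        · rw [hq'0 _ (not_lt.1 hmX), zero_mul]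
      have h3 : 0 ≤ k - 3 * δ := by linarith
      positivity
    · apply Finset.sum_nonneg
      intro i _
      unfold pd
      rw [(hwloc i X (by linarith)).fderiv_eq]
      simp
  have hD0 : D 0 ≠ 0 := by
    have : (0 : Fin 3 → ℝ) ∈ unitBall := by simp [unitBall]
    rw [hDball 0 this, hN0, hq1 0 hm0, hq'0 0 hm0]
    intro h
    linarith
  have hI := fun i => integral_pd_zero (hws i) (hwc i) i
  have hDc : Continuous D := continuous_finsetSum _ fun i _ => (hI i).2.1
  have hDs : HasCompactSupport D := by
    refine HasCompactSupport.intro isCompact_unitClosedBall ?_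
    intro X hX
    have : ¬ N X ≤ 1 := hX
    apply Finset.sum_eq_zero
    intro i _
    unfold pd
    rw [(hwloc i X (by linarith)).fderiv_eq]
    simp
  have hpos := hDc.integral_pos_of_hasCompactSupport_nonneg_nonzero
    (μ := MeasureTheory.volume) hDs hDn hD0
  have : ∫ X, D X = 0 := by
    simp only [hD]
    rw [MeasureTheory.integral_finsetSum]
    · exact Finset.sum_eq_zero fun i _ => (hI i).1
    · intro i _
      exact (hI i).2.1.integrable_of_hasCompactSupport (hI i).2.2
  linarith

lemma convex_unitBall : Convex ℝ unitBall := by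
  intro x hx y hy a b ha hb hab
  have hx' : ∑ i, x i ^ 2 < 1 := hx
  have hy' : ∑ i, y i ^ 2 < 1 := hy
  change ∑ i, (a * x i + b * y i) ^ 2 < 1
  have h1 : ∑ i, (a * x i + b * y i) ^ 2 ≤ a * ∑ i, x i ^ 2 + b * ∑ i, y i ^ 2 := by
    rw [Finset.mul_sum, Finset.mul_sum, ← Finset.sum_add_distrib]
    apply Finset.sum_le_sum
    intro i _
    obtain rfl : b = 1 - a := by linarith
    nlinarith [mul_nonneg (mul_nonneg ha hb) (sq_nonneg (x i - y i))]
  rcases ha.lt_or_eq with h | h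
  · nlinarith
  · have : b = 1 := by linarith
    subst h; subst this
    linarith

lemma unitClosedBall_subset : unitClosedBall ⊆ closure unitBall := by
  intro X hX
  have hX' : ∑ i, X i ^ 2 ≤ 1 := hX
  have ht : Filter.Tendsto (fun t : ℝ => t • X) (nhdsWithin 1 (Set.Iio 1)) (nhds X) := by
    have : Filter.Tendsto (fun t : ℝ => t • X) (nhds 1) (nhds ((1 : ℝ) • X)) :=
      (continuous_id.smul continuous_const).tendsto 1
    rw [one_smul] at this
    exact this.mono_left nhdsWithin_le_nhds
  refine mem_closure_of_tendsto ht ?_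
  filter_upwards [Ioo_mem_nhdsLT (show (0 : ℝ) < 1 by norm_num)] with t ht
  change ∑ i, (t * X i) ^ 2 < 1
  simp_rw [mul_pow, ← Finset.mul_sum]
  nlinarith [ht.1, ht.2]

lemma jac_eq (f : (Fin 3 → ℝ) → (Fin 3 → ℝ)) (x : Fin 3 → ℝ) :
    jac f x = LinearMap.toMatrix' (fderiv ℝ f x : (Fin 3 → ℝ) →ₗ[ℝ] (Fin 3 → ℝ)) := by
  ext i j
  simp [jac, LinearMap.toMatrix'_apply]

lemma jac_pd {f : (Fin 3 → ℝ) → (Fin 3 → ℝ)} {x : Fin 3 → ℝ} (hf : DifferentiableAt ℝ f x)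
    (a j : Fin 3) : jac f x a j = pd j (fun y => f y a) x := by
  have h := (hasFDerivAt_pi'.1 hf.hasFDerivAt a).fderiv
  simp [jac, pd, h]

lemma smooth_inverse {φ ψ : (Fin 3 → ℝ) → (Fin 3 → ℝ)} {B : Set (Fin 3 → ℝ)} (hB : IsOpen B)
    (hφ : ContDiffOn ℝ (⊤ : ℕ∞) φ B) (hdet : ∀ X ∈ B, (jac φ X).det ≠ 0)
    (hψ : ∀ X ∈ B, ψ (φ X) = X) {X : Fin 3 → ℝ} (hX : X ∈ B) :
    ContDiffAt ℝ (⊤ : ℕ∞) ψ (φ X) := by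
  have hc : ContDiffAt ℝ (⊤ : ℕ∞) φ X := hφ.contDiffAt (hB.mem_nhds hX)
  have hd : (fderiv ℝ φ X).det ≠ 0 := by
    have := hdet X hX
    rw [jac_eq, LinearMap.det_toMatrix'] at this
    exact this
  have hf' : HasFDerivAt φ (((fderiv ℝ φ X).toContinuousLinearEquivOfDetNeZero hd :
      (Fin 3 → ℝ) ≃L[ℝ] (Fin 3 → ℝ)) : (Fin 3 → ℝ) →L[ℝ] (Fin 3 → ℝ)) X := by
    refine (hc.differentiableAt (by simp)).hasFDerivAt.congr_fderiv ?_
    ext v; rfl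
  have hl := hc.to_localInverse hf' (by simp)
  refine hl.congr_of_eventuallyEq ?_
  refine (hc.hasStrictFDerivAt' hf' (by simp)).localInverse_unique ?_
  filter_upwards [hB.mem_nhds hX] with Y hY using hψ Y hY

lemma jac_mul {φ ψ : (Fin 3 → ℝ) → (Fin 3 → ℝ)} {B : Set (Fin 3 → ℝ)} (hB : IsOpen B)
    (hψ : ∀ X ∈ B, ψ (φ X) = X) {X : Fin 3 → ℝ} (hX : X ∈ B)
    (h1 : DifferentiableAt ℝ φ X) (h2 : DifferentiableAt ℝ ψ (φ X)) :
    jac ψ (φ X) * jac φ X = 1 := by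
  have hc := fderiv_comp X h2 h1
  have he : ψ ∘ φ =ᶠ[nhds X] id := by
    filter_upwards [hB.mem_nhds hX] with Y hY using hψ Y hY
  rw [he.fderiv_eq, fderiv_id] at hc
  have e : (fderiv ℝ ψ (φ X) : (Fin 3 → ℝ) →ₗ[ℝ] (Fin 3 → ℝ)) ∘ₗ
      (fderiv ℝ φ X : (Fin 3 → ℝ) →ₗ[ℝ] (Fin 3 → ℝ)) = LinearMap.id :=
    LinearMap.ext fun v => (DFunLike.congr_fun hc v).symm
  rw [jac_eq, jac_eq, ← LinearMap.toMatrix'_comp, e, LinearMap.toMatrix'_id]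

lemma univ_zero {U : Set (Fin 3 → ℝ)} {ψ : (Fin 3 → ℝ) → (Fin 3 → ℝ)}
    {σ0 : (Fin 3 → ℝ) → Matrix (Fin 3) (Fin 3) ℝ} (h : IsUniversal U ψ σ0)
    (n : Fin 10) {x : Fin 3 → ℝ} (hx : x ∈ U) (i : Fin 3) :
    pd i (fun y => invariants (bField ψ y) (σ0 y) n) x = 0 := by
  have := h (fun m => if m = 0 then (fun I => I n) else fun _ => 0) (by
    intro m
    by_cases hm : m = 0
    · simp only [hm, if_true]; fun_prop
    · simp only [hm, if_false]; fun_prop) x hx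
  have hi := congrFun this i
  simp only [mdiv, cauchyStress] at hi
  fin_cases i <;> simpa [Fin.sum_univ_three, pd, Matrix.one_apply] using hi

lemma univ_two {U : Set (Fin 3 → ℝ)} {ψ : (Fin 3 → ℝ) → (Fin 3 → ℝ)}
    {σ0 : (Fin 3 → ℝ) → Matrix (Fin 3) (Fin 3) ℝ} (h : IsUniversal U ψ σ0)
    {x : Fin 3 → ℝ} (hx : x ∈ U) (i : Fin 3) :
    ∑ j, pd j (fun y => cField ψ y i j) x = 0 := by
  have := h (fun m => if m = 2 then (fun I => 1) else fun _ => 0) (by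
    intro m
    by_cases hm : m = 2
    · simp only [hm, if_true]; fun_prop
    · simp only [hm, if_false]; fun_prop) x hx
  have hi := congrFun this i
  simp only [mdiv, cauchyStress] at hi
  simpa [pd] using hi

lemma univ_four {U : Set (Fin 3 → ℝ)} {ψ : (Fin 3 → ℝ) → (Fin 3 → ℝ)}
    {σ0 : (Fin 3 → ℝ) → Matrix (Fin 3) (Fin 3) ℝ} (h : IsUniversal U ψ σ0)
    {x : Fin 3 → ℝ} (hx : x ∈ U) (i : Fin 3) :
    ∑ j, pd j (fun y => (σ0 y * σ0 y) i j) x = 0 := by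
  have := h (fun m => if m = 4 then (fun I => 1) else fun _ => 0) (by
    intro m
    by_cases hm : m = 4
    · simp only [hm, if_true]; fun_prop
    · simp only [hm, if_false]; fun_prop) x hx
  have hi := congrFun this i
  simp only [mdiv, cauchyStress] at hi
  simpa [pd] using hi

lemma inv_three (J : Matrix (Fin 3) (Fin 3) ℝ) (σ : Matrix (Fin 3) (Fin 3) ℝ) :
    invariants (J⁻¹ * (J⁻¹)ᵀ) σ 2 = (J.det ^ 2)⁻¹ := by
  simp [invariants, Matrix.det_nonsing_inv, pow_two]

lemma trace_adj (A : Matrix (Fin 3) (Fin 3) ℝ) :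
    (A.trace ^ 2 - (A * A).trace) / 2 = A.adjugate.trace := by
  simp [Matrix.adjugate_fin_three, Matrix.trace_fin_three, Matrix.mul_apply, Fin.sum_univ_three]
  ring

lemma inv_two (J : Matrix (Fin 3) (Fin 3) ℝ) (hJ : J.det ≠ 0) (σ : Matrix (Fin 3) (Fin 3) ℝ) :
    invariants (J⁻¹ * (J⁻¹)ᵀ) σ 1 = (J.det ^ 2)⁻¹ * (Jᵀ * J).trace := by
  have h1 : (J⁻¹ * (J⁻¹)ᵀ) = (Jᵀ * J)⁻¹ := by
    rw [Matrix.mul_inv_rev, Matrix.transpose_nonsing_inv]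
  have h2 : (Jᵀ * J).det = J.det ^ 2 := by simp [pow_two]
  have h3 : ((Jᵀ * J)⁻¹).adjugate = (J.det ^ 2)⁻¹ • (Jᵀ * J) := by
    have hu : IsUnit (Jᵀ * J).det := by rw [h2]; exact (pow_ne_zero 2 hJ).isUnit
    have e : ((Jᵀ * J)⁻¹).adjugate * (Jᵀ * J)⁻¹ = ((Jᵀ * J)⁻¹).det • 1 := Matrix.adjugate_mul _
    have e2 := congrArg (fun Z => Z * (Jᵀ * J)) e
    simp only [Matrix.mul_assoc _ (Jᵀ * J)⁻¹ (Jᵀ * J), Matrix.nonsing_inv_mul _ hu] at e2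
    rw [Matrix.mul_one] at e2
    rw [e2, Matrix.det_nonsing_inv, h2]
    simp
  change ((J⁻¹ * (J⁻¹)ᵀ).trace ^ 2 - ((J⁻¹ * (J⁻¹)ᵀ) * (J⁻¹ * (J⁻¹)ᵀ)).trace) / 2 = _
  rw [trace_adj, h1, h3, Matrix.trace_smul, smul_eq_mul]

/-- A universal pair has constant Jacobian. -/
lemma jac_const {U : Set (Fin 3 → ℝ)} (hU : IsOpen U) (hUc : IsPreconnected U)
    {ψ : (Fin 3 → ℝ) → (Fin 3 → ℝ)} (hψ : ∀ x ∈ U, ContDiffAt ℝ (⊤ : ℕ∞) ψ x)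
    (hdet : ∀ x ∈ U, (jac ψ x).det ≠ 0)
    {σ0 : (Fin 3 → ℝ) → Matrix (Fin 3) (Fin 3) ℝ} (h : IsUniversal U ψ σ0)
    {x y : Fin 3 → ℝ} (hx : x ∈ U) (hy : y ∈ U) : jac ψ x = jac ψ y := by
  have hp : ∀ a, Smo U (fun y => ψ y a) := fun a z hz =>
    ((contDiffAt_pi.1 (hψ z hz)) a).contDiffWithinAt
  have hJ : ∀ z ∈ U, ∀ a j, jac ψ z a j = pd j (fun y => ψ y a) z := fun z hz a j =>
    jac_pd ((hψ z hz).differentiableAt (by simp)) a j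
  have D1 : ∀ a i, ∀ x ∈ U, DifferentiableAt ℝ (pd i (fun y => ψ y a)) x := fun a i x hx =>
    ((hp a).pd hU i).diff hU hx
  have hJm : ∀ z ∈ U, jac ψ z = Matrix.of fun a j => pd j (fun y => ψ y a) z := fun z hz => by
    ext a j; exact hJ z hz a j
  have hdd : ∀ z ∈ U, DifferentiableAt ℝ
      (fun z => (Matrix.of fun a j => pd j (fun y => ψ y a) z).det) z := by
    intro z hz
    simp only [Matrix.det_fin_three, Matrix.of_apply]
    have := fun a i => D1 a i z hz
    fun_prop
  have hI3 : ∀ z ∈ U, invariants (bField ψ z) (σ0 z) 2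
      = ((Matrix.of fun a j => pd j (fun y => ψ y a) z).det ^ 2)⁻¹ := by
    intro z hz
    rw [← hJm z hz]
    exact inv_three _ _
  have hd0 : ∀ z ∈ U, (Matrix.of fun a j => pd j (fun y => ψ y a) z).det ≠ 0 := by
    intro z hz; rw [← hJm z hz]; exact hdet z hz
  have hK : ∀ z ∈ U, ((jac ψ z).det ^ 2)⁻¹ = ((jac ψ x).det ^ 2)⁻¹ := by
    intro z hz
    rw [hJm z hz, hJm x hx]
    refine const_of_pd hU hUc
      (f := fun z => ((Matrix.of fun a j => pd j (fun y => ψ y a) z).det ^ 2)⁻¹) ?_ ?_ hz hx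
    · intro t ht
      exact ((hdd t ht).pow 2).inv (pow_ne_zero 2 (hd0 t ht))
    · intro t ht j
      rw [← pd_congr hU hI3 ht j]
      exact univ_zero h 2 ht j
  have hc : ∀ z ∈ U, ∀ i j, cField ψ z i j
      = ∑ a, pd i (fun y => ψ y a) z * pd j (fun y => ψ y a) z := by
    intro z hz i j
    simp [cField, Matrix.mul_apply, hJ z hz]
  have hq := homog hU (fun a y => ψ y a) hp ?_ ?_ hd0
  · ext a j
    rw [hJ x hx, hJ y hy]
    exact const_of_pd hU hUc (D1 a j) (fun z hz i => hq z hz a i j) hx hy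
  · intro z hz i
    rw [← univ_two h hz i]
    exact Finset.sum_congr rfl fun j _ => pd_congr hU (fun t ht => (hc t ht i j).symm) hz j
  · intro z hz i
    have h1 := univ_zero h 1 hz i
    have h2 : ∀ t ∈ U, invariants (bField ψ t) (σ0 t) 1 = ((jac ψ x).det ^ 2)⁻¹ *
        ∑ a, ∑ j, pd j (fun y => ψ y a) t * pd j (fun y => ψ y a) t := by
      intro t ht
      rw [← hK t ht, bField, inv_two _ (hdet t ht)]
      congr 1
      rw [Finset.sum_comm]
      simp [Matrix.trace, Matrix.mul_apply, hJ t ht]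
    rw [pd_congr hU h2 hz i, pd_mul (differentiableAt_const _)
      (DifferentiableAt.fun_sum fun a _ => DifferentiableAt.fun_sum fun j _ =>
        (D1 a j z hz).fun_mul (D1 a j z hz))] at h1
    have h3 : pd i (fun _ => ((jac ψ x).det ^ 2)⁻¹) z = 0 := by simp [pd]
    rw [h3, mul_zero, add_zero] at h1
    exact (mul_eq_zero.1 h1).resolve_left (inv_ne_zero (pow_ne_zero 2 (hdet x hx)))

lemma smo_mul {U : Set (Fin 3 → ℝ)} {A B : (Fin 3 → ℝ) → Matrix (Fin 3) (Fin 3) ℝ}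
    (hA : ∀ i j, Smo U (fun X => A X i j)) (hB : ∀ i j, Smo U (fun X => B X i j)) (i j : Fin 3) :
    Smo U (fun X => (A X * B X) i j) := by
  simp only [Matrix.mul_apply]
  exact ContDiffOn.sum fun l _ => (hA i l).mul (hB l j)

lemma cont_mul {U : Set (Fin 3 → ℝ)} {A B : (Fin 3 → ℝ) → Matrix (Fin 3) (Fin 3) ℝ}
    (hA : ∀ i j, ContinuousOn (fun X => A X i j) U)
    (hB : ∀ i j, ContinuousOn (fun X => B X i j) U) (i j : Fin 3) :
    ContinuousOn (fun X => (A X * B X) i j) U := by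
  simp only [Matrix.mul_apply]
  exact continuousOn_finsetSum _ fun l _ => (hA i l).mul (hB l j)

/-- Chain rule for partial derivatives. -/
lemma pd_chain {ψ : (Fin 3 → ℝ) → (Fin 3 → ℝ)} {f : (Fin 3 → ℝ) → ℝ} {x : Fin 3 → ℝ}
    (hψ : DifferentiableAt ℝ ψ x) (hf : DifferentiableAt ℝ f (ψ x)) (j : Fin 3) :
    pd j (fun y => f (ψ y)) x = ∑ k, pd k f (ψ x) * jac ψ x k j := by
  have hc := fderiv_comp x hf hψ
  change fderiv ℝ (f ∘ ψ) x _ = _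
  rw [hc, ContinuousLinearMap.comp_apply]
  have hv : fderiv ℝ ψ x (Pi.single j 1) = ∑ k, jac ψ x k j • (Pi.single k (1 : ℝ) : Fin 3 → ℝ) := by
    ext l
    simp [jac, Finset.sum_apply, Pi.single_apply]
  rw [hv, map_sum]
  simp [pd, mul_comm]

lemma div_field {M : (Fin 3 → ℝ) → Matrix (Fin 3) (Fin 3) ℝ} {F G : Matrix (Fin 3) (Fin 3) ℝ}
    {X : Fin 3 → ℝ} (hFG : F * G = 1) (hM : ∀ i j, DifferentiableAt ℝ (fun Y => M Y i j) X)
    (hd : ∀ i, ∑ j, ∑ k, pd k (fun Y => M Y i j) X * G k j = 0) :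
    ∑ k, pd k (fun Y => ∑ i, ∑ j, (G k j * M Y i j) * ∑ l, F i l * Y l) X = (M X).trace := by
  have hdc : ∀ l : Fin 3, DifferentiableAt ℝ (fun Y : Fin 3 → ℝ => Y l) X := fun l => by fun_prop
  have hdF : ∀ i : Fin 3, DifferentiableAt ℝ (fun Y : Fin 3 → ℝ => ∑ l, F i l * Y l) X :=
    fun i => by fun_prop
  have hGM : ∀ k i j : Fin 3, DifferentiableAt ℝ (fun Y : Fin 3 → ℝ => G k j * M Y i j) X :=
    fun k i j => (hM i j).const_mul _
  have hc : ∀ (k : Fin 3) (r : ℝ), pd k (fun _ => r) X = 0 := fun k r => by simp [pd]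
  have hpF : ∀ k i, pd k (fun Y : Fin 3 → ℝ => ∑ l, F i l * Y l) X = F i k := by
    intro k i
    rw [pd_sum _ (fun l _ => (hdc l).const_mul _)]
    simp_rw [pd_mul (differentiableAt_const _) (hdc _), hc, pd_coord]
    simp
  have e : ∀ k, pd k (fun Y => ∑ i, ∑ j, (G k j * M Y i j) * ∑ l, F i l * Y l) X
      = ∑ i, ∑ j, (G k j * M X i j * F i k
        + (∑ l, F i l * X l) * (G k j * pd k (fun Y => M Y i j) X)) := by
    intro k
    rw [pd_sum _ (fun i _ => DifferentiableAt.fun_sum fun j _ => (hGM k i j).fun_mul (hdF i))]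
    refine Finset.sum_congr rfl fun i _ => ?_
    rw [pd_sum _ (fun j _ => (hGM k i j).fun_mul (hdF i))]
    refine Finset.sum_congr rfl fun j _ => ?_
    rw [pd_mul (hGM k i j) (hdF i), hpF, pd_mul (differentiableAt_const _) (hM i j), hc]
    ring
  simp_rw [e, Finset.sum_add_distrib]
  have t1 : ∑ k, ∑ i, ∑ j, (∑ l, F i l * X l) * (G k j * pd k (fun Y => M Y i j) X) = 0 := by
    rw [Finset.sum_comm]
    refine Finset.sum_eq_zero fun i _ => ?_
    rw [Finset.sum_comm]
    simp_rw [← Finset.mul_sum]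
    rw [mul_eq_zero]
    right
    rw [← hd i]
    exact Finset.sum_congr rfl fun j _ => Finset.sum_congr rfl fun k _ => mul_comm _ _
  have t2 : ∑ k, ∑ i, ∑ j, G k j * M X i j * F i k = (M X).trace := by
    have : (M X).trace = ((M X) * (F * G)ᵀ).trace := by rw [hFG]; simp
    rw [this]
    simp only [Matrix.trace, Matrix.diag, Matrix.mul_apply, Matrix.transpose_apply]
    rw [Finset.sum_comm]
    refine Finset.sum_congr rfl fun i _ => ?_
    rw [Finset.sum_comm]
    refine Finset.sum_congr rfl fun j _ => ?_
    rw [Finset.mul_sum]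
    exact Finset.sum_congr rfl fun k _ => by ring
  rw [t1, t2, add_zero]

lemma boundary_field {s F G : Matrix (Fin 3) (Fin 3) ℝ} {X : Fin 3 → ℝ} (hGF : G * F = 1)
    (hs : s.mulVec X = 0) :
    ∑ k, (∑ i, ∑ j, (G k j * (F * s * Fᵀ * (F * s * Fᵀ)) i j) * ∑ l, F i l * X l) * X k = 0 := by
  have e : ∀ k, ∑ i, ∑ j, (G k j * (F * s * Fᵀ * (F * s * Fᵀ)) i j) * ∑ l, F i l * X l
      = (G *ᵥ ((F * s * Fᵀ * (F * s * Fᵀ))ᵀ *ᵥ (F *ᵥ X))) k := by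
    intro k
    simp only [Matrix.mulVec, dotProduct, Matrix.transpose_apply, Finset.mul_sum]
    rw [Finset.sum_comm]
    refine Finset.sum_congr rfl fun j _ => Finset.sum_congr rfl fun i _ =>
      Finset.sum_congr rfl fun l _ => by ring
  simp_rw [e]
  have e2 : G *ᵥ ((F * s * Fᵀ * (F * s * Fᵀ))ᵀ *ᵥ (F *ᵥ X))
      = sᵀ *ᵥ ((Fᵀ * (F * s * Fᵀ)ᵀ) *ᵥ (F *ᵥ X)) := by
    simp only [Matrix.mulVec_mulVec]
    congr 1
    simp only [Matrix.transpose_mul, Matrix.transpose_transpose, ← Matrix.mul_assoc]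
    rw [hGF, Matrix.one_mul]
  rw [e2]
  change (sᵀ *ᵥ ((Fᵀ * (F * s * Fᵀ)ᵀ) *ᵥ (F *ᵥ X))) ⬝ᵥ X = 0
  rw [Matrix.mulVec_transpose, ← Matrix.dotProduct_mulVec, hs, dotProduct_zero]

/-- Let `φ` be a smooth diffeomorphism of the open unit ball `B` onto
`U = φ(B)` with invertible derivative, such that `φ` and `Dφ` extend continuously to the
closed ball, and let `S̊` be a symmetric residual stress, continuous on the closed ball,
smooth inside, and traction-free on the boundary (`S̊(X)·X = 0` for `|X| = 1`). Define
`σ̊` on `U` by `σ̊(φ(X)) = Dφ(X) S̊(X) Dφ(X)ᵀ`. If `(φ⁻¹, σ̊)` is universal, then `Dφ`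
is constant on `B` and `S̊ = 0` on the closed ball: a non-trivial residual stress admits
no universal deformations, and in the residual-stress-free case the universal
deformations are exactly the homogeneous ones. -/
theorem no_universal_deformation_with_nontrivial_residual_stress
    (φ ψ : (Fin 3 → ℝ) → (Fin 3 → ℝ))
    (hφ : ContDiffOn ℝ (⊤ : ℕ∞) φ unitBall)
    (hφinj : Set.InjOn φ unitBall)
    (hφdet : ∀ X ∈ unitBall, (jac φ X).det ≠ 0)
    (hUopen : IsOpen (φ '' unitBall))
    (hφcont : ContinuousOn φ unitClosedBall)
    (hDφext : ∃ F : (Fin 3 → ℝ) → Matrix (Fin 3) (Fin 3) ℝ,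
      (∀ i j, ContinuousOn (fun X => F X i j) unitClosedBall) ∧
        ∀ X ∈ unitBall, F X = jac φ X)
    (hψ : ∀ X ∈ unitBall, ψ (φ X) = X)
    (S : (Fin 3 → ℝ) → Matrix (Fin 3) (Fin 3) ℝ)
    (hScont : ∀ i j, ContinuousOn (fun X => S X i j) unitClosedBall)
    (hSsmooth : ∀ i j, ContDiffOn ℝ (⊤ : ℕ∞) (fun X => S X i j) unitBall)
    (hSsym : ∀ X ∈ unitClosedBall, (S X)ᵀ = S X)
    (hStraction : ∀ X : Fin 3 → ℝ, (∑ i, X i ^ 2) = 1 → (S X).mulVec X = 0)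
    (σ0 : (Fin 3 → ℝ) → Matrix (Fin 3) (Fin 3) ℝ)
    (hσ0 : ∀ X ∈ unitBall, σ0 (φ X) = jac φ X * S X * (jac φ X)ᵀ)
    (huniv : IsUniversal (φ '' unitBall) ψ σ0) :
    (∀ X ∈ unitBall, ∀ Y ∈ unitBall, jac φ X = jac φ Y)
      ∧ (∀ X ∈ unitClosedBall, S X = 0) := by
  have hBo := isOpen_unitBall
  have hBc : IsPreconnected unitBall := convex_unitBall.isPreconnected
  have h0B : (0 : Fin 3 → ℝ) ∈ unitBall := by simp [unitBall]
  have hφd : ∀ X ∈ unitBall, DifferentiableAt ℝ φ X := fun X hX =>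
    (hφ.contDiffAt (hBo.mem_nhds hX)).differentiableAt (by simp)
  have hψs : ∀ x ∈ φ '' unitBall, ContDiffAt ℝ (⊤ : ℕ∞) ψ x := by
    rintro _ ⟨X, hX, rfl⟩
    exact smooth_inverse hBo hφ hφdet hψ hX
  have hψd : ∀ x ∈ φ '' unitBall, DifferentiableAt ℝ ψ x := fun x hx =>
    (hψs x hx).differentiableAt (by simp)
  have hmul : ∀ X ∈ unitBall, jac ψ (φ X) * jac φ X = 1 := fun X hX =>
    jac_mul hBo hψ hX (hφd X hX) (hψd _ ⟨X, hX, rfl⟩)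
  have hUc : IsPreconnected (φ '' unitBall) := hBc.image φ hφ.continuousOn
  have hψdet : ∀ x ∈ φ '' unitBall, (jac ψ x).det ≠ 0 := by
    rintro _ ⟨X, hX, rfl⟩ hz
    have := congrArg Matrix.det (hmul X hX)
    rw [Matrix.det_mul, hz, zero_mul, Matrix.det_one] at this
    exact zero_ne_one this
  have hJc : ∀ x ∈ φ '' unitBall, ∀ y ∈ φ '' unitBall, jac ψ x = jac ψ y := fun x hx y hy =>
    jac_const hUopen hUc hψs hψdet huniv hx hy
  have hinv : ∀ X ∈ unitBall, jac φ X = (jac ψ (φ X))⁻¹ := fun X hX =>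
    (Matrix.inv_eq_right_inv (hmul X hX)).symm
  have hφc : ∀ X ∈ unitBall, ∀ Y ∈ unitBall, jac φ X = jac φ Y := by
    intro X hX Y hY
    rw [hinv X hX, hinv Y hY, hJc _ ⟨X, hX, rfl⟩ _ ⟨Y, hY, rfl⟩]
  refine ⟨hφc, ?_⟩
  set F := jac φ 0 with hF
  set G := jac ψ (φ 0) with hG
  have hGF : G * F = 1 := hmul 0 h0B
  have hFG : F * G = 1 := mul_eq_one_comm.1 hGF
  have hσF : ∀ X ∈ unitBall, σ0 (φ X) = F * S X * Fᵀ := by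
    intro X hX
    rw [hσ0 X hX, hφc X hX 0 h0B]
  have hJG : ∀ x ∈ φ '' unitBall, jac ψ x = G := fun x hx => hJc x hx _ ⟨0, h0B, rfl⟩
  set M : (Fin 3 → ℝ) → Matrix (Fin 3) (Fin 3) ℝ :=
    fun X => F * S X * Fᵀ * (F * S X * Fᵀ) with hM
  have hψB : ∀ x ∈ φ '' unitBall, ψ x ∈ unitBall ∧ φ (ψ x) = x := by
    rintro _ ⟨X, hX, rfl⟩
    rw [hψ X hX]
    exact ⟨hX, rfl⟩
  have hσM : ∀ x ∈ φ '' unitBall, σ0 x * σ0 x = M (ψ x) := by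
    rintro _ ⟨X, hX, rfl⟩
    rw [hψ X hX, hσF X hX]
  have hMs : ∀ i j, Smo unitBall (fun X => M X i j) := by
    have hc : ∀ (A : Matrix (Fin 3) (Fin 3) ℝ) i j, Smo unitBall (fun _ => A i j) :=
      fun A i j => contDiffOn_const
    have h1 := smo_mul (smo_mul (A := fun _ => F) (hc F) hSsmooth) (B := fun _ => Fᵀ) (hc Fᵀ)
    exact smo_mul h1 h1
  have hMc : ∀ i j, ContinuousOn (fun X => M X i j) unitClosedBall := by
    have hc : ∀ (A : Matrix (Fin 3) (Fin 3) ℝ) i j,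
        ContinuousOn (fun _ : Fin 3 → ℝ => A i j) unitClosedBall :=
      fun A i j => continuousOn_const
    have h1 := cont_mul (cont_mul (A := fun _ => F) (hc F) hScont) (B := fun _ => Fᵀ) (hc Fᵀ)
    exact cont_mul h1 h1
  have hMd : ∀ i j, ∀ X ∈ unitBall, DifferentiableAt ℝ (fun X => M X i j) X :=
    fun i j X hX => (hMs i j).diff hBo hX
  have hMψ : ∀ i j, ∀ x ∈ φ '' unitBall, DifferentiableAt ℝ (fun x => M (ψ x) i j) x :=
    fun i j x hx => DifferentiableAt.comp x (hMd i j _ (hψB x hx).1) (hψd x hx)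
  have hdiv : ∀ X ∈ unitBall, ∀ i, ∑ j, ∑ k, pd k (fun Y => M Y i j) X * G k j = 0 := by
    intro X hX i
    have hx : φ X ∈ φ '' unitBall := ⟨X, hX, rfl⟩
    rw [← univ_four huniv hx i]
    refine Finset.sum_congr rfl fun j _ => ?_
    rw [pd_congr hUopen (fun y hy => congrFun (congrFun (hσM y hy) i) j) hx j,
      pd_chain (f := fun Y => M Y i j) (hψd _ hx) (hMd i j _ (hψB _ hx).1), hψ X hX, hJG _ hx]
  have htr : ∀ X ∈ unitBall, (M X).trace = (M 0).trace := by
    intro X hX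
    have := const_of_pd hUopen hUc (f := fun x => (M (ψ x)).trace) ?_ ?_
      (show φ X ∈ φ '' unitBall from ⟨X, hX, rfl⟩) (show φ 0 ∈ φ '' unitBall from ⟨0, h0B, rfl⟩)
    · simpa only [hψ X hX, hψ 0 h0B] using this
    · intro x hx
      exact DifferentiableAt.fun_sum fun i _ => hMψ i i x hx
    · intro x hx j
      rw [← univ_zero huniv 4 hx j]
      exact pd_congr hUopen (fun y hy => by rw [← hσM y hy]; rfl) hx j
  have hk : (M 0).trace ≤ 0 := by
    refine flux (fun k Y => ∑ i, ∑ j, (G k j * M Y i j) * ∑ l, F i l * Y l) _ ?_ ?_ ?_ ?_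
    · intro k
      refine ContDiffOn.sum fun i _ => ContDiffOn.sum fun j _ => ?_
      exact (contDiffOn_const.mul (hMs i j)).mul (ContDiff.contDiffOn (by fun_prop))
    · intro k
      refine continuousOn_finsetSum _ fun i _ => continuousOn_finsetSum _ fun j _ => ?_
      exact (continuousOn_const.mul (hMc i j)).mul (by fun_prop)
    · intro X hX
      exact boundary_field hGF (hStraction X hX)
    · intro X hX
      rw [← htr X hX]
      exact div_field hFG (fun i j => hMd i j X hX) (hdiv X hX)
  have hS0 : ∀ X ∈ unitBall, S X = 0 := by
    intro X hX
    have h1 : (M X).trace ≤ 0 := by rw [htr X hX]; exact hk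
    have hsym : (F * S X * Fᵀ)ᵀ = F * S X * Fᵀ := by
      simp [Matrix.transpose_mul, hSsym X (unitBall_sub hX), Matrix.mul_assoc]
    have h2 : (M X).trace = ∑ i, ∑ j, (F * S X * Fᵀ) i j ^ 2 := by
      simp only [hM, Matrix.trace, Matrix.diag]
      refine Finset.sum_congr rfl fun i _ => ?_
      rw [Matrix.mul_apply]
      refine Finset.sum_congr rfl fun j _ => ?_
      have := congrFun (congrFun hsym i) j
      rw [Matrix.transpose_apply] at this
      rw [this, pow_two]
    have h3 : ∑ i, ∑ j, (F * S X * Fᵀ) i j ^ 2 = 0 :=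
      le_antisymm (h2 ▸ h1) (Finset.sum_nonneg fun i _ => Finset.sum_nonneg fun j _ => sq_nonneg _)
    have h4 : F * S X * Fᵀ = 0 := by
      ext i j
      have a1 := (Finset.sum_eq_zero_iff_of_nonneg (fun i _ =>
        Finset.sum_nonneg fun j _ => sq_nonneg _)).1 h3 i (Finset.mem_univ _)
      have a2 := (Finset.sum_eq_zero_iff_of_nonneg (fun j _ => sq_nonneg _)).1 a1 j
        (Finset.mem_univ _)
      exact pow_eq_zero_iff (two_ne_zero) |>.1 a2
    have hT : Fᵀ * Gᵀ = 1 := by rw [← Matrix.transpose_mul, hGF, Matrix.transpose_one]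
    calc S X = (G * F) * S X * (Fᵀ * Gᵀ) := by rw [hGF, hT, Matrix.one_mul, Matrix.mul_one]
      _ = G * (F * S X * Fᵀ) * Gᵀ := by simp only [Matrix.mul_assoc]
      _ = 0 := by rw [h4]; simp
  intro X hX
  ext i j
  have : Set.EqOn (fun X => S X i j) (fun _ => 0) unitClosedBall :=
    Set.EqOn.of_subset_closure (s := unitBall) (fun Y hY => by simp [hS0 Y hY])
      (hScont i j) continuousOn_const (fun Y hY => unitBall_sub hY) unitClosedBall_subset
  exact this hX
end

section
/- Let U ⊆ ℝ³ be open and connected, let ψ : U → ℝ³ be smooth with invertible derivative Dψ(x) at every point, and let σ̊ : U → ℝ^{3×3} be a smooth field of symmetric matrices. If the pair (ψ, σ̊) is universal, then each of the ten invariants I₁, …, I₁₀ is constant on U. -/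
open Matrix

/-- Entrywise differentiability of a matrix field on `U`. -/
def EDiff (U : Set (Fin 3 → ℝ)) (A : (Fin 3 → ℝ) → Matrix (Fin 3) (Fin 3) ℝ) : Prop :=
  ∀ i j, DifferentiableOn ℝ (fun x => A x i j) U

theorem EDiff.mul {U : Set (Fin 3 → ℝ)} {A B : (Fin 3 → ℝ) → Matrix (Fin 3) (Fin 3) ℝ}
    (hA : EDiff U A) (hB : EDiff U B) : EDiff U (fun x => A x * B x) := by
  intro i j
  simp only [Matrix.mul_apply]
  exact DifferentiableOn.fun_sum fun k _ => (hA i k).mul (hB k j)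

theorem EDiff.trace {U : Set (Fin 3 → ℝ)} {A : (Fin 3 → ℝ) → Matrix (Fin 3) (Fin 3) ℝ}
    (hA : EDiff U A) : DifferentiableOn ℝ (fun x => (A x).trace) U := by
  simp only [Matrix.trace, Matrix.diag]
  exact DifferentiableOn.fun_sum fun k _ => hA k k

theorem EDiff.det {U : Set (Fin 3 → ℝ)} {A : (Fin 3 → ℝ) → Matrix (Fin 3) (Fin 3) ℝ}
    (hA : EDiff U A) : DifferentiableOn ℝ (fun x => (A x).det) U := by
  simp only [Matrix.det_fin_three]
  have h := hA
  unfold EDiff at h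
  fun_prop

theorem EDiff.inv {U : Set (Fin 3 → ℝ)} {A : (Fin 3 → ℝ) → Matrix (Fin 3) (Fin 3) ℝ}
    (hA : EDiff U A) (h0 : ∀ x ∈ U, (A x).det ≠ 0) : EDiff U (fun x => (A x)⁻¹) := by
  intro i j
  simp only [Matrix.inv_def, Ring.inverse_eq_inv', Matrix.smul_apply, smul_eq_mul,
    Matrix.adjugate_apply]
  refine (hA.det.inv h0).mul (EDiff.det ?_)
  intro k l
  by_cases hk : k = j
  · subst hk
    simp only [Matrix.updateRow_self]
    exact differentiableOn_const _
  · simp only [Matrix.updateRow_ne hk]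
    exact hA k l

/-- For a universal pair `(ψ, σ̊)` on an open connected `U ⊆ ℝ³`,
all ten invariants `I₁, …, I₁₀` are constant on `U`. -/
theorem universal_implies_constant_invariants
    (U : Set (Fin 3 → ℝ)) (hUopen : IsOpen U) (hUconn : IsConnected U)
    (ψ : (Fin 3 → ℝ) → (Fin 3 → ℝ)) (hψ : ContDiffOn ℝ (⊤ : ℕ∞) ψ U)
    (hinv : ∀ x ∈ U, (jac ψ x).det ≠ 0)
    (σ0 : (Fin 3 → ℝ) → Matrix (Fin 3) (Fin 3) ℝ)
    (hσsmooth : ∀ i j, ContDiffOn ℝ (⊤ : ℕ∞) (fun x => σ0 x i j) U)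
    (hσsym : ∀ x ∈ U, (σ0 x)ᵀ = σ0 x)
    (huniv : IsUniversal U ψ σ0) :
    ∀ x ∈ U, ∀ y ∈ U,
      invariants (bField ψ x) (σ0 x) = invariants (bField ψ y) (σ0 y) := by
  have hJ : EDiff U (jac ψ) := by
    intro i j
    have h1 : DifferentiableOn ℝ (fderiv ℝ ψ) U :=
      (hψ.fderiv_of_isOpen (m := 1) hUopen (by norm_cast)).differentiableOn
        (by norm_num)
    have h2 : DifferentiableOn ℝ (fun x => fderiv ℝ ψ x (Pi.single j 1)) U :=
      h1.clm_apply (differentiableOn_const _)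
    exact (differentiableOn_pi.1 h2) i
  have hI := hJ.inv hinv
  have hb : EDiff U (bField ψ) := hI.mul (B := fun x => ((jac ψ x)⁻¹)ᵀ) (fun i j => hI j i)
  have hs : EDiff U σ0 := fun i j => (hσsmooth i j).differentiableOn (by simp)
  have hbb := hb.mul hb
  have hss := hs.mul hs
  have key : ∀ k, DifferentiableOn ℝ (fun x => invariants (bField ψ x) (σ0 x) k) U := by
    intro k
    fin_cases k
    · exact hb.trace
    · have h1 := hb.trace
      have h2 := hbb.trace
      have h3 : DifferentiableOn ℝ
          (fun x => ((bField ψ x).trace ^ 2 - (bField ψ x * bField ψ x).trace) / 2) U := by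
        simp only [div_eq_mul_inv]
        exact ((h1.fun_pow 2).fun_sub h2).mul_const _
      exact h3
    · exact hb.det
    · exact hs.trace
    · exact hss.trace
    · exact (hss.mul hs).trace
    · exact (hb.mul hs).trace
    · exact (hbb.mul hs).trace
    · exact ((hb.mul hs).mul hs).trace
    · exact ((hbb.mul hs).mul hs).trace
  intro x hx y hy
  funext k
  refine hUopen.is_const_of_fderiv_eq_zero (𝕜 := ℝ) hUconn.isPreconnected (key k) ?_ hx hy
  intro z hz
  have hu := huniv (fun i v => if i = 0 then v k else 0) (by
    intro i
    by_cases hi : i = 0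
    · simp only [hi, if_true]; fun_prop
    · simp only [hi, if_false]; fun_prop) z hz
  have hc : ∀ i, fderiv ℝ (fun x => invariants (bField ψ x) (σ0 x) k) z (Pi.single i 1) = 0 := by
    intro i
    have h := congrFun hu i
    simp only [mdiv, cauchyStress] at h
    rw [Finset.sum_eq_single i] at h
    · simpa using h
    · intro j _ hj
      simp [Matrix.one_apply_ne hj.symm]
    · simp
  refine ContinuousLinearMap.coe_injective (LinearMap.pi_ext' fun i => ?_)
  ext
  simpa using hc i
end
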